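/- For every integer n ≥ 2, every tree of size n with a distinguished root has a straight-line upward planar grid drawing of width at most n and height at most ⌈log₂ n⌉. -/

import Mathlib

/-!
Let the children of each vertex be traversed with a child of largest subtree last, let `x v` be the
resulting preorder number of `v`, and let `z v` count the edges on the path from the root to `v`
that do not lead to such a last child. Placing `v` at abscissa `x v` and `z v` rows below the top
gives the drawing.

*Height.* An edge to a child `c` which is not last satisfies `2 * |D c| + 1 ≤ |D v|`, where `D v` is
the set of descendants of `v`, so `log₂ (|D c| + 1) + 1 ≤ log₂ (|D v| + 1)`, and a subtree of size
`m` uses at most `⌊log₂ (m + 1)⌋` rows (`exists_layout_desc`). For `m ≥ 2` this is at most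
`⌈log₂ m⌉`.

*Planarity.* Every edge `u → v` goes right and weakly down, and every vertex whose preorder number
lies strictly between those of `u` and `v` is in the subtree of an earlier child of `u`, which lies
strictly below the segment `uv`. This single condition (`LeftDown.between`) already excludes all
crossings: two edges whose horizontal spans overlap must have nested spans, and then the inner
segment lies below the outer one (`LeftDown.inter_of_nested`). Layouts of subtrees are glued with the
condition preserved by `Layout.join`.
-/

open SimpleGraph

/-- A straight-line planar drawing of a graph `G`: an injective map of vertices to points of
`ℝ²` such that no vertex lies in the interior of (or on) a non-incident edge segment, and any
two distinct edge segments intersect exactly in the images of their common endpoints. -/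
def IsStraightLineDrawing {V : Type} (G : SimpleGraph V) (f : V → ℝ × ℝ) : Prop :=
  Function.Injective f ∧
  (∀ u v w : V, G.Adj u v → w ≠ u → w ≠ v → f w ∉ segment ℝ (f u) (f v)) ∧
  (∀ u v u' v' : V, G.Adj u v → G.Adj u' v' → s(u, v) ≠ s(u', v') →
    segment ℝ (f u) (f v) ∩ segment ℝ (f u') (f v') =
      f '' {w | (w = u ∨ w = v) ∧ (w = u' ∨ w = v')})

/-- A grid drawing of width `W` and height `H`: a straight-line planar drawing with all
vertices on integer grid points of `{1, …, W} × {1, …, H}`. -/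
def IsGridDrawing {V : Type} (G : SimpleGraph V) (f : V → ℝ × ℝ) (W H : ℕ) : Prop :=
  IsStraightLineDrawing G f ∧
  ∀ x : V, ∃ i j : ℤ, 1 ≤ i ∧ i ≤ (W : ℤ) ∧ 1 ≤ j ∧ j ≤ (H : ℤ) ∧ f x = ((i : ℝ), (j : ℝ))

/-- In a tree with distinguished root `r`, `u` is the parent of `v` iff `u` is a neighbor of
`v` lying on the path from `v` to `r` (equivalently, one step closer to the root). -/
def IsParent {V : Type} (G : SimpleGraph V) (r u v : V) : Prop :=
  G.Adj u v ∧ G.dist r u + 1 = G.dist r v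

/-- A drawing is upward (w.r.t. root `r`) if every parent is drawn at a `y`-coordinate
greater than or equal to that of each of its children. -/
def IsUpward {V : Type} (G : SimpleGraph V) (r : V) (f : V → ℝ × ℝ) : Prop :=
  ∀ u v : V, IsParent G r u v → (f v).2 ≤ (f u).2

/-! ### Combinatorial layouts of rooted trees -/

/-- A layout of the rooted tree on the vertex set `S` with root `a`, where `R u v` says that `u` is
the parent of `v`: `x` is the column and `z` the row, counted downwards from the row `0` of the
root. At most `h` rows are used, and all vertices other than the root are in row `t` or below; thus
`t = 0` is no restriction and `t = 1` says that the root is alone in the top row. -/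
structure Layout {V : Type} (R : V → V → Prop) (S : Finset V) (a : V) (h t : ℕ)
    (x z : V → ℕ) : Prop where
  inj : ∀ u ∈ S, ∀ v ∈ S, x u = x v → u = v
  lt_card : ∀ w ∈ S, x w < S.card
  x_root : x a = 0
  z_root : z a = 0
  lt_height : ∀ w ∈ S, z w < h
  le_row : ∀ w ∈ S, w ≠ a → t ≤ z w
  mono : ∀ u ∈ S, ∀ v ∈ S, R u v → x u < x v ∧ z u ≤ z v
  between : ∀ u ∈ S, ∀ v ∈ S, R u v → ∀ w ∈ S, x u < x w → x w < x v → z u < z w ∧ z v ≤ z w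

theorem Layout.singleton {V : Type} {R : V → V → Prop} (hR : ∀ v, ¬ R v v) (a : V) {h t : ℕ}
    (hh : 0 < h) : Layout R {a} a h t (fun _ => 0) (fun _ => 0) := by
  constructor <;> simp_all

/-- The tree on `B` is attached to the root of the tree on `A` as its last child, to the right of
`A` and `δ ∈ {0, 1}` rows below the root of `A`. -/
theorem Layout.join {V : Type} [DecidableEq V] {R : V → V → Prop} {A B : Finset V} {a b : V}
    {h h₁ h₂ t δ : ℕ} {x₁ z₁ x₂ z₂ : V → ℕ}
    (hA : Layout R A a h₁ 1 x₁ z₁) (hB : Layout R B b h₂ t x₂ z₂)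
    (haA : a ∈ A) (hdisj : ∀ w ∈ B, w ∉ A)
    (hAB : ∀ u ∈ A, ∀ v ∈ B, R u v → u = a ∧ v = b) (hBA : ∀ u ∈ A, ∀ v ∈ B, ¬ R v u)
    (hδ : δ ≤ 1) (hh₁ : h₁ ≤ h) (hh₂ : h₂ + δ ≤ h) :
    Layout R (A ∪ B) a h δ (fun w => if w ∈ A then x₁ w else A.card + x₂ w)
      (fun w => if w ∈ A then z₁ w else z₂ w + δ) := by
  have hcard : (A ∪ B).card = A.card + B.card :=
    Finset.card_union_of_disjoint (Finset.disjoint_right.2 fun w hw => hdisj w hw)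
  have cA := hA.lt_card
  have cB := hB.lt_card
  have hxb := hB.x_root
  have hzb := hB.z_root
  have hxa := hA.x_root
  have hza := hA.z_root
  constructor
  · intro u hu v hv huv
    have := hA.inj u
    have := hB.inj u
    grind
  · grind
  · simp [haA, hxa]
  · simp [haA, hza]
  · have := hA.lt_height
    have := hB.lt_height
    grind
  · have := hA.le_row
    grind
  · intro u hu v hv huv
    have := hA.mono u
    have := hB.mono u
    grind
  · intro u hu v hv huv w hw huw hwv
    have := hA.between u
    have := hB.between u
    -- for the new edge `a → b` the vertices in between are those of `A` other than `a`
    have hrow : w ∈ A → 0 < x₁ w → 1 ≤ z₁ w := fun hwA hx =>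
      hA.le_row w hwA (by rintro rfl; omega)
    by_cases huA : u ∈ A <;> by_cases hvA : v ∈ A <;> by_cases hwA : w ∈ A <;>
      simp only [huA, hvA, hwA, if_true, if_false] at huw hwv ⊢ <;> grind

/-! ### Descendants -/

open Classical in
/-- The set of descendants of `v` (including `v`) for the parent relation `R`. -/
noncomputable def desc {V : Type} [Fintype V] (R : V → V → Prop) (v : V) : Finset V :=
  Finset.univ.filter fun w => Relation.ReflTransGen R v w

section Desc

variable {V : Type} [Fintype V] {R : V → V → Prop} {d : V → ℕ}

theorem mem_desc {v w : V} : w ∈ desc R v ↔ Relation.ReflTransGen R v w := by simp [desc]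

theorem self_mem_desc (v : V) : v ∈ desc R v := mem_desc.2 .refl

theorem le_of_mem_desc (hd : ∀ u v, R u v → d u + 1 = d v) {v w : V} (h : w ∈ desc R v) :
    d v ≤ d w := by
  rw [mem_desc] at h
  induction h with
  | refl => exact le_rfl
  | tail _ hbc ih => have := hd _ _ hbc; omega

/-- A vertex whose parent is known enters a descendant set either as its top or via its parent. -/
theorem eq_or_parent_mem (hu : ∀ u u' v, R u v → R u' v → u = u') {c u w : V}
    (hw : w ∈ desc R c) (h : R u w) : w = c ∨ u ∈ desc R c := by
  rw [mem_desc] at hw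
  rcases Relation.ReflTransGen.cases_tail hw with h1 | ⟨b, hb, hbw⟩
  · exact .inl h1
  · rw [hu u b w h hbw]
    exact .inr (mem_desc.2 hb)

theorem child_mem {c u w : V} (hu : u ∈ desc R c) (h : R u w) : w ∈ desc R c :=
  mem_desc.2 ((mem_desc.1 hu).tail h)

theorem desc_disjoint (hd : ∀ u v, R u v → d u + 1 = d v)
    (hu : ∀ u u' v, R u v → R u' v → u = u') {v c c' w : V} (hc : R v c) (hc' : R v c')
    (hw : w ∈ desc R c) (hw' : w ∈ desc R c') : c = c' := by
  -- induction on the path from `c` to `w`: except at its top, a descendant set is closed under parents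
  rw [mem_desc] at hw
  induction hw with
  | refl =>
    rcases eq_or_parent_mem hu hw' hc with h | h
    · exact h
    · have := le_of_mem_desc hd h
      have := hd _ _ hc'
      omega
  | tail hb hbc ih =>
    rcases eq_or_parent_mem hu hw' hbc with h | h
    · subst h
      have := le_of_mem_desc hd (mem_desc.2 hb)
      have := hd _ _ hc
      have := hd _ _ hc'
      have := hd _ _ hbc
      omega
    · exact ih h

open Classical in
/-- The subtree of `v` in which only the branches through the children in `C` are kept. -/
noncomputable def branches (R : V → V → Prop) (v : V) (C : Finset V) : Finset V :=
  insert v (C.biUnion (desc R))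

theorem mem_branches {v w : V} {C : Finset V} :
    w ∈ branches R v C ↔ w = v ∨ ∃ c ∈ C, w ∈ desc R c := by simp [branches]

open Classical in
theorem branches_insert (v c : V) (C : Finset V) :
    branches R v (insert c C) = branches R v C ∪ desc R c := by
  ext w
  rw [Finset.mem_union, mem_branches, mem_branches, Finset.exists_mem_insert, or_assoc,
    or_comm (a := w ∈ desc R c)]

open Classical in
theorem desc_eq_branches (v : V) : desc R v = branches R v (Finset.univ.filter (R v)) := by
  ext w
  rw [mem_branches, mem_desc, Relation.ReflTransGen.cases_head_iff]
  simp [mem_desc, eq_comm]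

open Classical in
/-- `Layout.join` for one more branch of the subtree of `v`. -/
theorem Layout.add_branch (hd : ∀ u v, R u v → d u + 1 = d v)
    (hu : ∀ u u' v, R u v → R u' v → u = u') {v c : V} {C : Finset V}
    (hC : ∀ c ∈ C, R v c) (hc : R v c) (hcC : c ∉ C) {h h₁ h₂ t δ : ℕ} {x₁ z₁ x₂ z₂ : V → ℕ}
    (hA : Layout R (branches R v C) v h₁ 1 x₁ z₁) (hB : Layout R (desc R c) c h₂ t x₂ z₂)
    (hδ : δ ≤ 1) (hh₁ : h₁ ≤ h) (hh₂ : h₂ + δ ≤ h) :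
    ∃ x z, Layout R (branches R v (insert c C)) v h δ x z := by
  rw [branches_insert]
  have hdisj : ∀ w ∈ desc R c, w ∉ branches R v C := by
    intro w hw hw'
    rcases mem_branches.1 hw' with rfl | ⟨c', hc', hw'⟩
    · have := le_of_mem_desc hd hw
      have := hd _ _ hc
      omega
    · exact hcC (desc_disjoint hd hu hc (hC c' hc') hw hw' ▸ hc')
  refine ⟨_, _, hA.join hB (mem_branches.2 (.inl rfl)) hdisj ?_ ?_ hδ hh₁ hh₂⟩
  · intro u huA w hw huw
    rcases eq_or_parent_mem hu hw huw with rfl | h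
    · exact ⟨hu _ _ _ huw hc, rfl⟩
    · exact absurd huA (hdisj u h)
  · intro u huA w hw hwu
    exact hdisj u (child_mem hw hwu) huA

/-- Placing all branches one row down leaves the root alone in the top row. -/
theorem exists_layout_branches (hd : ∀ u v, R u v → d u + 1 = d v)
    (hu : ∀ u u' v, R u v → R u' v → u = u') {v : V} {h : ℕ} (hh : 0 < h) (C : Finset V)
    (hC : ∀ c ∈ C, R v c)
    (hL : ∀ c ∈ C, ∃ h', h' + 1 ≤ h ∧ ∃ x z, Layout R (desc R c) c h' 0 x z) :
    ∃ x z, Layout R (branches R v C) v h 1 x z := by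
  classical
  induction C using Finset.induction_on with
  | empty =>
    have : branches R v ∅ = {v} := by simp [branches]
    rw [this]
    exact ⟨_, _, Layout.singleton (fun w hw => by have := hd _ _ hw; omega) v hh⟩
  | insert c C hcC ih =>
    obtain ⟨x₁, z₁, h₁⟩ := ih (fun c hc => hC c (Finset.mem_insert_of_mem hc))
      (fun c hc => hL c (Finset.mem_insert_of_mem hc))
    obtain ⟨h', hh', x₂, z₂, h₂⟩ := hL c (Finset.mem_insert_self _ _)
    exact Layout.add_branch hd hu (fun c hc => hC c (Finset.mem_insert_of_mem hc))
      (hC c (Finset.mem_insert_self _ _)) hcC h₁ h₂ le_rfl le_rfl hh'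

/-- A rooted tree with `m` vertices has a layout with `⌊log₂ (m + 1)⌋` rows: the branch of a child
with the most descendants is placed last, in the row of the root. -/
theorem exists_layout_desc (hd : ∀ u v, R u v → d u + 1 = d v)
    (hu : ∀ u u' v, R u v → R u' v → u = u') (k : ℕ) : ∀ v : V, (desc R v).card ≤ k →
    ∃ x z, Layout R (desc R v) v (Nat.log 2 ((desc R v).card + 1)) 0 x z := by
  classical
  induction k with
  | zero =>
    intro v hv
    have := Finset.card_pos.2 ⟨v, self_mem_desc (R := R) v⟩
    omega
  | succ k ih =>
    intro v hv
    have hpos : 0 < (desc R v).card := Finset.card_pos.2 ⟨v, self_mem_desc v⟩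
    have hlog : 0 < Nat.log 2 ((desc R v).card + 1) := Nat.log_pos (by norm_num) (by omega)
    have hnv : ∀ c, R v c → v ∉ desc R c := fun c hc h => by
      have := le_of_mem_desc hd h
      have := hd _ _ hc
      omega
    have hsub : ∀ c, R v c → desc R c ⊆ desc R v := fun c hc w hw =>
      mem_desc.2 ((mem_desc.1 hw).head hc)
    have hlt : ∀ c, R v c → (desc R c).card < (desc R v).card := fun c hc =>
      Finset.card_lt_card ⟨hsub c hc, fun h => hnv c hc (h (self_mem_desc v))⟩
    set C := Finset.univ.filter (R v) with hCdef
    have hC : ∀ c, c ∈ C ↔ R v c := by simp [C]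
    rcases C.eq_empty_or_nonempty with hCe | hCne
    · have : desc R v = {v} := by
        rw [desc_eq_branches, ← hCdef, hCe]; simp [branches]
      rw [this] at hlog ⊢
      exact ⟨_, _, Layout.singleton (fun w hw => by have := hd _ _ hw; omega) v hlog⟩
    · obtain ⟨m, hm, hmax⟩ := C.exists_max_image (fun c => (desc R c).card) hCne
      have hRm := (hC m).1 hm
      obtain ⟨x₂, z₂, h₂⟩ := ih m (by have := hlt m hRm; omega)
      obtain ⟨x₁, z₁, h₁⟩ := exists_layout_branches hd hu hlog (C.erase m)
        (fun c hc => (hC c).1 (Finset.mem_of_mem_erase hc)) (by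
          intro c hc
          have hcC := Finset.mem_of_mem_erase hc
          have hRc := (hC c).1 hcC
          refine ⟨_, ?_, ih c (by have := hlt c hRc; omega)⟩
          have hdis : Disjoint (desc R c) (desc R m) := Finset.disjoint_left.2 fun w hw hw' =>
            Finset.ne_of_mem_erase hc (desc_disjoint hd hu hRc hRm hw hw')
          have hss : insert v (desc R c ∪ desc R m) ⊆ desc R v :=
            Finset.insert_subset (self_mem_desc v)
              (Finset.union_subset (hsub c hRc) (hsub m hRm))
          have hle := Finset.card_le_card hss
          rw [Finset.card_insert_of_notMem
            (by simp [hnv c hRc, hnv m hRm]), Finset.card_union_of_disjoint hdis] at hle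
          have hcm := hmax c hcC
          rw [← Nat.log_mul_base (by norm_num) (by omega)]
          exact Nat.log_mono_right (by omega))
      have hj := Layout.add_branch hd hu
        (fun c hc => (hC c).1 (Finset.mem_of_mem_erase hc)) hRm (Finset.notMem_erase m C) h₁ h₂
        (δ := 0) (by norm_num) le_rfl
        (h := Nat.log 2 ((desc R v).card + 1))
        (by simpa using Nat.log_mono_right (Nat.succ_le_succ (hlt m hRm).le))
      rwa [Finset.insert_erase hm, hCdef, ← desc_eq_branches] at hj

end Desc

/-! ### Planarity -/

/-- Sufficient conditions for planarity of a map `f` of the vertices to the plane: edges, oriented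
from left to right, go weakly down, and every vertex horizontally strictly inside an edge is
strictly below its left end and weakly below its right end. -/
structure LeftDown {V : Type} (G : SimpleGraph V) (f : V → ℝ × ℝ) : Prop where
  inj : ∀ u v, (f u).1 = (f v).1 → u = v
  down : ∀ u v, G.Adj u v → (f u).1 < (f v).1 → (f v).2 ≤ (f u).2
  between : ∀ u v, G.Adj u v → ∀ w, (f u).1 < (f w).1 → (f w).1 < (f v).1 →
    (f w).2 < (f u).2 ∧ (f w).2 ≤ (f v).2

section Planar

variable {V : Type} {G : SimpleGraph V} {f : V → ℝ × ℝ}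

/-- The affine function that vanishes on the line through `p` and `q` and is negative below it if
`p.1 < q.1`. -/
def above (p q s : ℝ × ℝ) : ℝ := (s.2 - p.2) * (q.1 - p.1) - (q.2 - p.2) * (s.1 - p.1)

theorem LeftDown.above_neg (hf : LeftDown G f) {u v w : V} (huv : G.Adj u v)
    (h1 : (f u).1 < (f w).1) (h2 : (f w).1 < (f v).1) : above (f u) (f v) (f w) < 0 := by
  obtain ⟨h3, h4⟩ := hf.between u v huv w h1 h2
  have h5 := hf.down u v huv (h1.trans h2)
  unfold above
  rcases h5.eq_or_lt with h5 | h5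
  · rw [h5]
    nlinarith
  · nlinarith [mul_pos (sub_pos.2 h5) (sub_pos.2 h2),
      mul_nonneg (sub_nonneg.2 h4) (sub_pos.2 (h1.trans h2)).le]

theorem above_eq_zero {p q s : ℝ × ℝ} (h : s ∈ segment ℝ p q) : above p q s = 0 := by
  obtain ⟨a, b, ha, hb, hab, rfl⟩ := h
  obtain rfl : a = 1 - b := by linarith
  simp only [above, Prod.fst_add, Prod.snd_add, Prod.smul_fst, Prod.smul_snd, smul_eq_mul]
  ring

theorem fst_mem_of_mem_segment {p q s : ℝ × ℝ} (hpq : p.1 ≤ q.1) (h : s ∈ segment ℝ p q) :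
    p.1 ≤ s.1 ∧ s.1 ≤ q.1 := by
  obtain ⟨a, b, ha, hb, hab, rfl⟩ := h
  obtain rfl : a = 1 - b := by linarith
  simp only [Prod.fst_add, Prod.smul_fst, smul_eq_mul]
  constructor <;> nlinarith

theorem eq_left_of_fst_le {p q s : ℝ × ℝ} (hpq : p.1 < q.1) (h : s ∈ segment ℝ p q)
    (hs : s.1 ≤ p.1) : s = p := by
  obtain ⟨a, b, ha, hb, hab, rfl⟩ := h
  obtain rfl : a = 1 - b := by linarith
  simp only [Prod.fst_add, Prod.smul_fst, smul_eq_mul] at hs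
  have : b = 0 := by nlinarith
  simp [this]

theorem eq_right_of_le_fst {p q s : ℝ × ℝ} (hpq : p.1 < q.1) (h : s ∈ segment ℝ p q)
    (hs : q.1 ≤ s.1) : s = q := by
  obtain ⟨a, b, ha, hb, hab, rfl⟩ := h
  obtain rfl : a = 1 - b := by linarith
  simp only [Prod.fst_add, Prod.smul_fst, smul_eq_mul] at hs
  have : b = 1 := by nlinarith
  simp [this]

/-- An edge whose horizontal span lies in that of another edge can only meet it in a common
endpoint, since each other endpoint of the inner edge is strictly below the outer edge. -/
theorem LeftDown.inter_of_nested (hf : LeftDown G f) {u v u' v' : V} (huv : G.Adj u v)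
    (hl' : (f u').1 < (f v').1) (h1 : (f u).1 ≤ (f u').1)
    (h2 : (f v').1 ≤ (f v).1) (hne : ¬ (u = u' ∧ v = v')) {s : ℝ × ℝ}
    (hs : s ∈ segment ℝ (f u) (f v)) (hs' : s ∈ segment ℝ (f u') (f v')) :
    ∃ w, (w = u ∨ w = v) ∧ (w = u' ∨ w = v') ∧ f w = s := by
  have hz := above_eq_zero hs
  have hu' : u = u' ∨ above (f u) (f v) (f u') < 0 := by
    rcases h1.eq_or_lt with h | h
    · exact .inl (hf.inj _ _ h)
    · exact .inr (hf.above_neg huv h (hl'.trans_le h2))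
  have hv' : v = v' ∨ above (f u) (f v) (f v') < 0 := by
    rcases h2.eq_or_lt with h | h
    · exact .inl (hf.inj _ _ h.symm)
    · exact .inr (hf.above_neg huv (h1.trans_lt hl') h)
  have hv0 : above (f u) (f v) (f v) = 0 := by unfold above; ring
  have hu0 : above (f u) (f v) (f u) = 0 := by unfold above; ring
  obtain ⟨a, b, ha, hb, hab, rfl⟩ := hs'
  have hlin : above (f u) (f v) (a • f u' + b • f v') =
      a * above (f u) (f v) (f u') + b * above (f u) (f v) (f v') := by
    obtain rfl : a = 1 - b := by linarith
    simp only [above, Prod.fst_add, Prod.snd_add, Prod.smul_fst, Prod.smul_snd, smul_eq_mul]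
    ring
  rw [hlin] at hz
  rcases hu' with rfl | hu'
  · rcases hv' with rfl | hv'
    · exact absurd ⟨rfl, rfl⟩ hne
    · obtain rfl : b = 0 := by nlinarith
      obtain rfl : a = 1 := by linarith
      exact ⟨u, by simp, by simp, by simp⟩
  · rcases hv' with rfl | hv'
    · obtain rfl : a = 0 := by nlinarith
      obtain rfl : b = 1 := by linarith
      exact ⟨v, by simp, by simp, by simp⟩
    · exfalso
      rcases ha.eq_or_lt with rfl | ha
      · nlinarith
      · nlinarith [mul_pos ha (neg_pos.2 hu'), mul_nonneg hb (neg_nonneg.2 hv'.le)]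

theorem LeftDown.inter_of_le (hf : LeftDown G f) {u v u' v' : V}
    (hl : (f u).1 < (f v).1) (hl' : (f u').1 < (f v').1) (h : (f v).1 ≤ (f u').1) {s : ℝ × ℝ}
    (hs : s ∈ segment ℝ (f u) (f v)) (hs' : s ∈ segment ℝ (f u') (f v')) :
    ∃ w, (w = u ∨ w = v) ∧ (w = u' ∨ w = v') ∧ f w = s := by
  have h1 := fst_mem_of_mem_segment hl.le hs
  have h2 := fst_mem_of_mem_segment hl'.le hs'
  have h3 := hf.inj v u' (by linarith [h1.2, h2.1])
  exact ⟨v, by simp, by simp [h3], (eq_right_of_le_fst hl hs (h.trans h2.1)).symm⟩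

theorem LeftDown.inter_oriented (hf : LeftDown G f) {u v u' v' : V} (huv : G.Adj u v)
    (huv' : G.Adj u' v') (hl : (f u).1 < (f v).1) (hl' : (f u').1 < (f v').1)
    (hne : ¬ (u = u' ∧ v = v')) {s : ℝ × ℝ}
    (hs : s ∈ segment ℝ (f u) (f v)) (hs' : s ∈ segment ℝ (f u') (f v')) :
    ∃ w, (w = u ∨ w = v) ∧ (w = u' ∨ w = v') ∧ f w = s := by
  have swap : (∃ w, (w = u' ∨ w = v') ∧ (w = u ∨ w = v) ∧ f w = s) →
      ∃ w, (w = u ∨ w = v) ∧ (w = u' ∨ w = v') ∧ f w = s := by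
    rintro ⟨w, h1, h2, h3⟩
    exact ⟨w, h2, h1, h3⟩
  have hne' : ¬ (u' = u ∧ v' = v) := fun h => hne ⟨h.1.symm, h.2.symm⟩
  rcases le_or_gt (f v).1 (f u').1 with h | h
  · exact hf.inter_of_le hl hl' h hs hs'
  rcases le_or_gt (f v').1 (f u).1 with h' | h'
  · exact swap (hf.inter_of_le hl' hl h' hs' hs)
  rcases le_or_gt (f u).1 (f u').1 with h1 | h1 <;> rcases le_or_gt (f v').1 (f v).1 with h2 | h2
  · exact hf.inter_of_nested huv hl' h1 h2 hne hs hs'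
  · rcases h1.eq_or_lt with h1 | h1
    · exact swap (hf.inter_of_nested huv' hl h1.ge h2.le hne' hs' hs)
    · -- properly crossing spans: each of `u'` and `v` would be below the other
      have := (hf.between u v huv u' h1 h).2
      have := (hf.between u' v' huv' v h h2).1
      linarith
  · rcases h2.eq_or_lt with h2 | h2
    · exact swap (hf.inter_of_nested huv' hl h1.le h2.ge hne' hs' hs)
    · have := (hf.between u' v' huv' u h1 h').2
      have := (hf.between u v huv v' h' h2).1
      linarith
  · exact swap (hf.inter_of_nested huv' hl h1.le h2.le hne' hs' hs)

theorem LeftDown.isStraightLineDrawing (hf : LeftDown G f) : IsStraightLineDrawing G f := by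
  have hx : ∀ u v, G.Adj u v → (f u).1 < (f v).1 ∨ (f v).1 < (f u).1 := fun u v h =>
    lt_or_gt_of_ne fun h' => h.ne (hf.inj _ _ h')
  have hmem : ∀ u v w, G.Adj u v → (f u).1 < (f v).1 → w ≠ u → w ≠ v →
      f w ∉ segment ℝ (f u) (f v) := by
    intro u v w huv hl hwu hwv hw
    obtain ⟨h1, h2⟩ := fst_mem_of_mem_segment hl.le hw
    have := hf.above_neg huv (lt_of_le_of_ne h1 fun h => hwu (hf.inj _ _ h).symm)
      (lt_of_le_of_ne h2 fun h => hwv (hf.inj _ _ h))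
    exact this.ne (above_eq_zero hw)
  have hint : ∀ u v u' v', G.Adj u v → G.Adj u' v' → s(u, v) ≠ s(u', v') → ∀ s,
      s ∈ segment ℝ (f u) (f v) → s ∈ segment ℝ (f u') (f v') →
      ∃ w, (w = u ∨ w = v) ∧ (w = u' ∨ w = v') ∧ f w = s := by
    intro u v u' v' huv huv' hne s hs hs'
    rw [Ne, Sym2.eq_iff, not_or] at hne
    rcases hx u v huv with hl | hl <;> rcases hx u' v' huv' with hl' | hl'
    · exact hf.inter_oriented huv huv' hl hl' hne.1 hs hs'
    · rw [segment_symm] at hs'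
      obtain ⟨w, h1, h2, h3⟩ := hf.inter_oriented huv huv'.symm hl hl' hne.2 hs hs'
      exact ⟨w, h1, h2.symm, h3⟩
    · rw [segment_symm] at hs
      obtain ⟨w, h1, h2, h3⟩ :=
        hf.inter_oriented huv.symm huv' hl hl' (fun h => hne.2 ⟨h.2, h.1⟩) hs hs'
      exact ⟨w, h1.symm, h2, h3⟩
    · rw [segment_symm] at hs hs'
      obtain ⟨w, h1, h2, h3⟩ :=
        hf.inter_oriented huv.symm huv'.symm hl hl' (fun h => hne.1 ⟨h.2, h.1⟩) hs hs'
      exact ⟨w, h1.symm, h2.symm, h3⟩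
  refine ⟨fun u v h => hf.inj u v (by rw [h]), ?_, ?_⟩
  · intro u v w huv hwu hwv
    rcases hx u v huv with hl | hl
    · exact hmem u v w huv hl hwu hwv
    · rw [segment_symm]
      exact hmem v u w huv.symm hl hwv hwu
  · intro u v u' v' huv huv' hne
    ext s
    constructor
    · rintro ⟨hs, hs'⟩
      obtain ⟨w, h1, h2, h3⟩ := hint u v u' v' huv huv' hne s hs hs'
      exact ⟨w, ⟨h1, h2⟩, h3⟩
    · rintro ⟨w, ⟨h1, h2⟩, rfl⟩
      constructor
      · rcases h1 with rfl | rfl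
        exacts [left_mem_segment _ _ _, right_mem_segment _ _ _]
      · rcases h2 with rfl | rfl
        exacts [left_mem_segment _ _ _, right_mem_segment _ _ _]

end Planar

/-! ### The parent relation of a tree -/

theorem isParent_unique {V : Type} {G : SimpleGraph V} (hG : G.IsTree) {r u u' v : V}
    (h : IsParent G r u v) (h' : IsParent G r u' v) : u = u' := by
  have key : ∀ u, IsParent G r u v → ∀ q : G.Walk r v, q.IsPath → u = q.penultimate := by
    intro u h q hq
    obtain ⟨p, hp⟩ := hG.connected.exists_walk_length_eq_dist r u
    have hpath : (p.concat h.1).IsPath :=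
      Walk.isPath_of_length_eq_dist _ (by rw [Walk.length_concat, hp, h.2])
    rw [(hG.existsUnique_path r v).unique hq hpath, Walk.penultimate_concat]
  obtain ⟨q, hq, -⟩ := hG.connected.exists_path_of_dist r v
  rw [key u h q hq, key u' h' q hq]

theorem desc_root {V : Type} [Fintype V] {G : SimpleGraph V} (hG : G.IsTree) (r : V) :
    desc (IsParent G r) r = Finset.univ := by
  refine Finset.eq_univ_of_forall fun w => ?_
  suffices ∀ k w, G.dist r w = k → w ∈ desc (IsParent G r) r from this _ w rfl
  intro k
  induction k with
  | zero =>
    intro w hw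
    rw [← hG.connected.dist_eq_zero_iff.1 hw]
    exact self_mem_desc _
  | succ k ih =>
    intro w hw
    obtain ⟨q, hq⟩ := hG.connected.exists_walk_length_eq_dist r w
    have hnil : ¬ q.Nil := fun h => by
      have := Walk.length_eq_zero_iff.2 h
      omega
    have hadj := q.adj_penultimate hnil
    have hle := dist_le q.dropLast
    rw [Walk.length_dropLast] at hle
    have hd : G.dist r q.penultimate = k := by
      have := hadj.diff_dist_adj (u := r)
      omega
    exact child_mem (ih _ hd) ⟨hadj, by omega⟩

/-- From two vertices on, the `⌊log₂ (n + 1)⌋` rows of `exists_layout_desc` fit into `⌈log₂ n⌉`. -/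
theorem log_succ_le_clog {n : ℕ} (hn : 2 ≤ n) : Nat.log 2 (n + 1) ≤ Nat.clog 2 n := by
  have h1 := Nat.le_pow_clog (b := 2) (by norm_num) n
  refine Nat.le_of_lt_succ (Nat.log_lt_of_lt_pow (by omega) ?_)
  rw [pow_succ]
  omega

theorem stmt2 (n : ℕ) (hn : 2 ≤ n) (V : Type) [Fintype V]
    (G : SimpleGraph V) (hG : G.IsTree) (hcard : Fintype.card V = n) (r : V) :
    ∃ f : V → ℝ × ℝ, IsGridDrawing G f n (Nat.clog 2 n) ∧ IsUpward G r f := by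
  obtain ⟨x, z, hL⟩ := exists_layout_desc (R := IsParent G r) (d := fun v => G.dist r v)
    (fun _ _ h => h.2) (fun _ _ _ h h' => isParent_unique hG h h') _ r le_rfl
  rw [desc_root hG, Finset.card_univ, hcard] at hL
  have hmono : ∀ u v, IsParent G r u v → x u < x v ∧ z u ≤ z v := fun u v h =>
    hL.mono u (Finset.mem_univ _) v (Finset.mem_univ _) h
  -- an edge going to the right leads from a parent to its child
  have hpar : ∀ u v, G.Adj u v → x u < x v → IsParent G r u v := by
    intro u v huv hlt
    rcases hG.dist_eq_dist_add_one_of_adj r huv with h | h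
    · have := (hmono v u ⟨huv.symm, h.symm⟩).1
      omega
    · exact ⟨huv, h.symm⟩
  have hz : ∀ w, z w < Nat.clog 2 n := fun w =>
    (hL.lt_height w (Finset.mem_univ _)).trans_le (log_succ_le_clog hn)
  refine ⟨fun v => ((x v : ℝ) + 1, (Nat.clog 2 n : ℝ) - z v), ⟨?_, ?_⟩, ?_⟩
  · refine LeftDown.isStraightLineDrawing ⟨?_, ?_, ?_⟩
    · intro u v h
      exact hL.inj u (Finset.mem_univ _) v (Finset.mem_univ _) (by simpa using h)
    · intro u v huv h
      exact sub_le_sub_left (Nat.cast_le.2 (hmono u v (hpar u v huv (by simpa using h))).2) _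
    · intro u v huv w h1 h2
      have h1' : x u < x w := by simpa using h1
      have h2' : x w < x v := by simpa using h2
      obtain ⟨h3, h4⟩ := hL.between u (Finset.mem_univ _) v (Finset.mem_univ _)
        (hpar u v huv (h1'.trans h2')) w (Finset.mem_univ _) h1' h2'
      exact ⟨sub_lt_sub_left (Nat.cast_lt.2 h3) _, sub_le_sub_left (Nat.cast_le.2 h4) _⟩
  · intro w
    have h1 := hL.lt_card w (Finset.mem_univ _)
    rw [Finset.card_univ, hcard] at h1
    have h2 := hz w
    exact ⟨x w + 1, Nat.clog 2 n - z w, by omega, by omega, by omega, by omega, by push_cast; rfl⟩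
  · intro u v h
    exact sub_le_sub_left (Nat.cast_le.2 (hmono u v h).2) _
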